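/- Let τ₁ be a natural number with τ₁ ≥ 3 and let Ψ : (0,∞) → (0,∞) be given by Ψ(q) = q^{−τ₁}. If ω : (0,∞) → (0,∞) is given by ω(q) = q^{−τ₂} for some τ₂ with 0 < τ₂ < τ₁(τ₁ − 1), then dim_H(E(Ψ,ω)) = 2/(τ₁ + τ₂). -/

import Mathlib

/-!
Write `n = τ₁` and `t = τ₂`.

**Upper bound.** A point of `E(Ψ, ω)` lies, for infinitely many `q`, in one of the annuli
`(1 - q ^ (-t)) * q ^ (-n) ≤ |x - p / q| ≤ q ^ (-n)`, each of which consists of two intervals of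
length `q ^ (-n - t)`. In a bounded region there are `O(q)` of them for each `q`, so these natural
covers have `d`-weight bounded by a tail of `∑ q ^ (1 - d * (n + t))`, which vanishes in the limit
for `d > 2 / (n + t)` (`hausdorffMeasure_ESet_inter`).

**Lower bound.** The exact approximation set contains the intersections of nested sequences of
nodes, the node of a rational `f` of denominator `q` being the inner half of the annulus to the
right of `f`. Given a node, of length `ℓ = q ^ (-n - t) / 2`, and a large scale `N`, its children are
nodes of rationals `g` with denominator between `N / 256` and `N`, and one has to know that no
rational of intermediate denominator comes too close to their points.

* Denominators below `max (q ^ (n - 1)) (q ^ t) / 2` cause no harm: rationals repel the centre `f`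
  and also the corner `f + q ^ (-n)`, which is a rational of denominator exactly `q ^ n` because `n`
  is an integer; the corner itself is harmless because `t < n * (n - 1)` (`gap_near_corner`).
* Larger denominators are avoided on all but one eighth of the node (`vol_bad_powers`), except
  those beyond about `N ^ (1 / (n - 1))`, which are repelled by `g` (`gap_before`).
* For most points of the node, Dirichlet's theorem provides a rational with denominator of order `N`
  (`vol_bad_dirichlet`). Hence there are at least `ℓ * N ^ 2 / 2000` children.

Instead of constructing a measure on the resulting Cantor set, suppose that the set has zero
`s`-dimensional Hausdorff measure for some `s < 2 / (n + t)` and fix a cover by balls with tiny total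
weight `∑ r i ^ s`. Balls large compared with `N ^ (-2)` can be avoided by the choice of children,
and small balls meet at most one child each. By the pigeonhole principle some child is met only by
balls of small total weight relative to its size (`exists_child`), since `N ^ 2 * N ^ (-s * (n + t))`
tends to infinity. Iterating yields a point of the set that no ball covers, a contradiction
(`hausdorffMeasure_ESet_ne_zero`).
-/

open Filter Set

/-- A real number `x` is `Ψ`-approximable: `|x - p/q| ≤ Ψ q` for infinitely many
pairs `(p, q) ∈ ℤ × ℕ` (with `q > 0`).  `WSet Ψ` is the set `W(Ψ)` of such `x`. -/
def WSet (Ψ : ℝ → ℝ) : Set ℝ :=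
  {x : ℝ | {pq : ℤ × ℕ | 0 < pq.2 ∧ |x - (pq.1 : ℝ) / (pq.2 : ℝ)| ≤ Ψ (pq.2 : ℝ)}.Infinite}

/-- `ESet Ψ ω` is the set `E(Ψ, ω)` of `x ∈ W(Ψ)` such that for all sufficiently large
`q ∈ ℕ` one has `|x - p/q| ≥ (1 - ω q) * Ψ q` for every `p ∈ ℤ`. -/
def ESet (Ψ ω : ℝ → ℝ) : Set ℝ :=
  {x : ℝ | x ∈ WSet Ψ ∧ ∃ Q : ℕ, ∀ q : ℕ, Q ≤ q → ∀ p : ℤ,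
    (1 - ω (q : ℝ)) * Ψ (q : ℝ) ≤ |x - (p : ℝ) / (q : ℝ)|}

open MeasureTheory
open scoped ENNReal NNReal Topology

/-! ### Counting rationals in an interval -/

/-- Distinct rationals are separated by the inverse of the product of their denominators. -/
theorem den_sep (f g : ℚ) (h : f ≠ g) : 1 / ((f.den : ℝ) * g.den) ≤ |(f : ℝ) - g| := by
  have hf : (0:ℝ) < f.den := by exact_mod_cast f.den_pos
  have hg : (0:ℝ) < g.den := by exact_mod_cast g.den_pos
  have e : (f : ℝ) - g = ((f.num * g.den - g.num * f.den : ℤ) : ℝ) / (f.den * g.den) := by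
    rw [Rat.cast_def f, Rat.cast_def g]; push_cast; field_simp
  have hne : (f.num * g.den - g.num * f.den : ℤ) ≠ 0 := by
    intro h0
    apply h
    have : (f : ℝ) - g = 0 := by rw [e, h0]; simp
    exact_mod_cast sub_eq_zero.1 this
  rw [e, abs_div, abs_of_pos (mul_pos hf hg)]
  gcongr
  have := Int.one_le_abs hne
  exact_mod_cast this

/-- The rationals of denominator at most `Q` are `1 / Q ^ 2`-separated, which bounds their number in
an interval. -/
theorem rat_count (a b Q : ℝ) (hab : a ≤ b) (hQ : 0 < Q) :
    {f : ℚ | a ≤ f ∧ (f : ℝ) ≤ b ∧ (f.den : ℝ) ≤ Q}.Finite ∧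
    ({f : ℚ | a ≤ f ∧ (f : ℝ) ≤ b ∧ (f.den : ℝ) ≤ Q}.ncard : ℝ) ≤ (b - a) * Q ^ 2 + 1 := by
  set S := {f : ℚ | a ≤ f ∧ (f : ℝ) ≤ b ∧ (f.den : ℝ) ≤ Q} with hS
  have hmaps : ∀ f ∈ S, ⌊((f : ℝ) - a) * Q ^ 2⌋₊ ∈
      (Finset.range (⌊(b - a) * Q ^ 2⌋₊ + 1) : Set ℕ) := by
    intro f hf
    simp only [Finset.coe_range, mem_Iio]
    apply Nat.lt_succ_of_le
    apply Nat.floor_mono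
    gcongr
    exact hf.2.1
  have hinj : InjOn (fun f : ℚ => ⌊((f : ℝ) - a) * Q ^ 2⌋₊) S := by
    intro f hf g hg hfg
    by_contra hne
    have h1 := den_sep f g hne
    have hf0 : (0:ℝ) < f.den := by exact_mod_cast f.den_pos
    have hg0 : (0:ℝ) < g.den := by exact_mod_cast g.den_pos
    have h2 : 1 / Q ^ 2 ≤ 1 / ((f.den : ℝ) * g.den) := by
      apply one_div_le_one_div_of_le (by positivity)
      rw [sq]; exact mul_le_mul hf.2.2 hg.2.2 hg0.le hQ.le
    have hQ2 : 0 < Q ^ 2 := by positivity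
    have h3 : 1 ≤ |(f : ℝ) - g| * Q ^ 2 := by
      rw [← div_le_iff₀ hQ2]; exact h2.trans h1
    have hfg' : ⌊((f : ℝ) - a) * Q ^ 2⌋₊ = ⌊((g : ℝ) - a) * Q ^ 2⌋₊ := hfg
    have f1 := Nat.floor_le (a := ((f : ℝ) - a) * Q ^ 2)
      (by have := hf.1; apply mul_nonneg <;> [linarith; positivity])
    have f2 := Nat.lt_floor_add_one (((f : ℝ) - a) * Q ^ 2)
    have g1 := Nat.floor_le (a := ((g : ℝ) - a) * Q ^ 2)
      (by have := hg.1; apply mul_nonneg <;> [linarith; positivity])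
    have g2 := Nat.lt_floor_add_one (((g : ℝ) - a) * Q ^ 2)
    rw [hfg'] at f1 f2
    rcases abs_cases ((f : ℝ) - g) with ⟨h, _⟩ | ⟨h, _⟩ <;> rw [h] at h3 <;> nlinarith
  have hfin : S.Finite := Set.Finite.of_injOn hmaps hinj (Finset.finite_toSet _)
  refine ⟨hfin, ?_⟩
  have hc := Set.ncard_le_ncard_of_injOn _ hmaps hinj (Finset.finite_toSet _)
  rw [Set.ncard_coe_finset, Finset.card_range] at hc
  have : (S.ncard : ℝ) ≤ ⌊(b - a) * Q ^ 2⌋₊ + 1 := by exact_mod_cast hc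
  have h4 := Nat.floor_le (a := (b - a) * Q ^ 2) (by apply mul_nonneg <;> [linarith; positivity])
  linarith

/-- Measure of the points of `[a, b]` that are `ρ`-close to a rational of denominator at most
`2 * D`. -/
theorem vol_near (a b D ρ : ℝ) (hab : a ≤ b) (hD : 0 < D) (hρ : 0 ≤ ρ) :
    volume {x : ℝ | x ∈ Icc a b ∧ ∃ f : ℚ, (f.den : ℝ) ≤ 2 * D ∧ |x - f| ≤ ρ} ≤
      ENNReal.ofReal ((4 * D ^ 2 * (b - a + 2 * ρ) + 1) * (2 * ρ)) := by
  obtain ⟨hfin, hcard⟩ := rat_count (a - ρ) (b + ρ) (2 * D) (by linarith) (by linarith)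
  set S := {f : ℚ | a - ρ ≤ f ∧ (f : ℝ) ≤ b + ρ ∧ (f.den : ℝ) ≤ 2 * D} with hS
  have hsub : {x : ℝ | x ∈ Icc a b ∧ ∃ f : ℚ, (f.den : ℝ) ≤ 2 * D ∧ |x - f| ≤ ρ} ⊆
      ⋃ f ∈ hfin.toFinset, Metric.closedBall (f : ℝ) ρ := by
    rintro x ⟨⟨h1, h2⟩, f, hf, hx⟩
    have := abs_le.1 hx
    simp only [mem_iUnion, Set.Finite.mem_toFinset]
    exact ⟨f, ⟨by linarith, by linarith, hf⟩, by rwa [Metric.mem_closedBall, Real.dist_eq]⟩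
  refine (measure_mono hsub).trans ((measure_biUnion_finset_le _ _).trans ?_)
  simp only [Real.volume_closedBall, Finset.sum_const, nsmul_eq_mul]
  rw [Set.ncard_eq_toFinset_card S hfin] at hcard
  rw [← ENNReal.ofReal_natCast, ← ENNReal.ofReal_mul (by positivity)]
  apply ENNReal.ofReal_le_ofReal
  gcongr
  nlinarith

/-! ### Measure of the exceptional sets -/

theorem sum_half_le (c : ℝ) (hc : 0 ≤ c) (K : ℕ) :
    ∑ j ∈ Finset.range K, c * (1 / 2 : ℝ) ^ j ≤ 2 * c := by
  rw [← Finset.mul_sum, geom_sum_eq (by norm_num)]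
  have h1 : (0:ℝ) ≤ (1 / 2) ^ K := by positivity
  have h2 : ((1 / 2 : ℝ) ^ K - 1) / (1 / 2 - 1) ≤ 2 := by
    rw [div_le_iff_of_neg (by norm_num)]; linarith
  nlinarith

/-- The points of `[a, b]` lying within `2 / q ^ n` of a rational of denominator `q` in
`[D, 2 ^ K * D)` fill at most one eighth of the interval. The range of denominators is cut into
dyadic blocks; the block `q ∼ 2 ^ j * D` contributes `O((b - a) * (2 ^ j * D) ^ (2 - n) + (2 ^ j * D) ^ (-n))`, and the two
lower bounds on `D` make the sum over `j` small. -/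
theorem vol_bad_powers (n K : ℕ) (hn : 3 ≤ n) (a b D : ℝ) (hab : a < b) (hD : 1000 ≤ D)
    (hDn : 1000 ≤ (b - a) * D ^ n) :
    volume {x : ℝ | x ∈ Icc a b ∧ ∃ f : ℚ, D ≤ f.den ∧ (f.den : ℝ) < 2 ^ K * D ∧
      |x - f| ≤ 2 * ((f.den : ℝ) ^ n)⁻¹} ≤ ENNReal.ofReal ((b - a) / 8) := by
  set ℓ := b - a with hℓ
  have hℓ0 : 0 < ℓ := by simp only [hℓ]; linarith
  have hD0 : 0 < D := by linarith
  have hsub : {x : ℝ | x ∈ Icc a b ∧ ∃ f : ℚ, D ≤ f.den ∧ (f.den : ℝ) < 2 ^ K * D ∧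
      |x - f| ≤ 2 * ((f.den : ℝ) ^ n)⁻¹} ⊆ ⋃ j ∈ Finset.range K,
      {x : ℝ | x ∈ Icc a b ∧ ∃ f : ℚ, (f.den : ℝ) ≤ 2 * (2 ^ j * D) ∧
        |x - f| ≤ 2 * ((2 ^ j * D) ^ n)⁻¹} := by
    rintro x ⟨hx, f, h1, h2, h3⟩
    have hex : ∃ j : ℕ, (f.den : ℝ) < 2 ^ j * D := ⟨K, h2⟩
    classical
    have hs := Nat.find_spec hex
    have hpos : Nat.find hex ≠ 0 := by
      intro h0; rw [h0] at hs; simp at hs; linarith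
    obtain ⟨j, hj⟩ := Nat.exists_eq_succ_of_ne_zero hpos
    have hmin := Nat.find_min hex (m := j) (by omega)
    have hle := Nat.find_min' hex h2
    rw [hj] at hs
    simp only [mem_iUnion, Finset.mem_range]
    refine ⟨j, by omega, hx, f, ?_, h3.trans ?_⟩
    · rw [pow_succ] at hs; linarith
    · push Not at hmin
      gcongr
  refine (measure_mono hsub).trans ((measure_biUnion_finset_le _ _).trans ?_)
  have hblock : ∀ j ∈ Finset.range K,
      volume {x : ℝ | x ∈ Icc a b ∧ ∃ f : ℚ, (f.den : ℝ) ≤ 2 * (2 ^ j * D) ∧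
        |x - f| ≤ 2 * ((2 ^ j * D) ^ n)⁻¹} ≤ ENNReal.ofReal (ℓ / 16 * (1 / 2) ^ j) := by
    intro j _
    refine (vol_near a b (2 ^ j * D) (2 * ((2 ^ j * D) ^ n)⁻¹) hab.le (by positivity)
      (by positivity)).trans ?_
    apply ENNReal.ofReal_le_ofReal
    rw [← hℓ]
    set u : ℝ := 2 ^ j with hu
    have hu1 : 1 ≤ u := one_le_pow₀ (by norm_num)
    have hhalf : (1 / 2 : ℝ) ^ j = u⁻¹ := by rw [hu, one_div, inv_pow]
    rw [hhalf]
    set ρ := ((u * D) ^ n)⁻¹ with hρ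
    have hρ0 : 0 < ρ := by positivity
    obtain ⟨k, rfl⟩ := Nat.exists_eq_add_of_le hn
    -- ρ ≤ ℓ/(1000 u) and (uD)^2 ρ ≤ 1/(1000 u)
    have e1 : ρ * 1000 * u ≤ ℓ := by
      have h1 : u * D ^ (3 + k) ≤ (u * D) ^ (3 + k) := by
        rw [mul_pow]; gcongr; exact le_self_pow₀ hu1 (by omega)
      have h2 : 1000 * u ≤ ℓ * (u * D) ^ (3 + k) := by nlinarith
      rw [hρ, mul_assoc, inv_mul_le_iff₀ (by positivity)]; linarith
    have e2 : (u * D) ^ 2 * ρ * 1000 * u ≤ 1 := by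
      have h1 : (u * D) ^ 3 ≤ (u * D) ^ (3 + k) :=
        pow_le_pow_right₀ (by nlinarith) (by omega)
      have h2 : (u * D) ^ 2 * 1000 * u ≤ (u * D) ^ (3 + k) := by
        refine le_trans ?_ h1
        have : (u * D) ^ 2 * 1000 * u = ((u * D) ^ 2 * u) * 1000 := by ring
        rw [this, show (u * D) ^ 3 = ((u * D) ^ 2 * u) * D by ring]
        gcongr
      have : (u * D) ^ 2 * ρ * 1000 * u = ((u * D) ^ 2 * 1000 * u) * ρ := by ring
      rw [this, hρ, ← div_eq_mul_inv, div_le_one (by positivity)]; exact h2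
    have e3 : ρ * 1000 ≤ ℓ := by nlinarith
    clear_value ρ
    rw [← div_eq_mul_inv (ℓ / 16), le_div_iff₀ (by positivity)]
    have e4 : (4 * (u * D) ^ 2 * (ℓ + 2 * (2 * ρ)) + 1) * (2 * (2 * ρ)) * u
      = 16 * ((u * D) ^ 2 * ρ * u) * (ℓ + 4 * ρ) + 4 * (ρ * u) := by ring
    rw [e4]
    have e5 : 16 * ((u * D) ^ 2 * ρ * u) * (ℓ + 4 * ρ) ≤ 16 * (1 / 1000) * (ℓ + 4 * ρ) := by
      gcongr; linarith
    nlinarith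
  refine (Finset.sum_le_sum hblock).trans ?_
  rw [← ENNReal.ofReal_sum_of_nonneg (fun _ _ => by positivity)]
  apply ENNReal.ofReal_le_ofReal
  have := sum_half_le (ℓ / 16) (by positivity) K
  linarith

/-- Most points of `[a, b]` have no rational of denominator `q < 2 ^ K ≤ N / 256` within the Dirichlet
distance `1 / (q * N)`, so for them Dirichlet's theorem yields a denominator of order `N`. -/
theorem vol_bad_dirichlet (K : ℕ) (a b N : ℝ) (hab : a < b) (hN : 256 * 2 ^ K ≤ N)
    (hNℓ : 1000 ≤ (b - a) * N) :
    volume {x : ℝ | x ∈ Icc a b ∧ ∃ f : ℚ, f.den < 2 ^ K ∧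
      |x - f| ≤ 1 / (f.den * N)} ≤ ENNReal.ofReal ((b - a) / 8) := by
  set ℓ := b - a with hℓ
  have hℓ0 : 0 < ℓ := by simp only [hℓ]; linarith
  have hN0 : 0 < N := lt_of_lt_of_le (by positivity) hN
  have hsub : {x : ℝ | x ∈ Icc a b ∧ ∃ f : ℚ, f.den < 2 ^ K ∧
      |x - f| ≤ 1 / (f.den * N)} ⊆ ⋃ j ∈ Finset.range K,
      {x : ℝ | x ∈ Icc a b ∧ ∃ f : ℚ, (f.den : ℝ) ≤ 2 * 2 ^ j ∧
        |x - f| ≤ 1 / (2 ^ j * N)} := by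
    rintro x ⟨hx, f, h2, h3⟩
    have h0 : f.den ≠ 0 := f.den_ne_zero
    have hl := Nat.pow_log_le_self 2 h0
    have hu := Nat.lt_pow_succ_log_self (b := 2) (by norm_num) f.den
    simp only [mem_iUnion, Finset.mem_range]
    refine ⟨Nat.log 2 f.den, Nat.log_lt_of_lt_pow h0 h2, hx, f, ?_, h3.trans ?_⟩
    · rw [pow_succ] at hu
      have : (f.den : ℝ) < 2 ^ (Nat.log 2 f.den) * 2 := by exact_mod_cast hu
      linarith
    · have : (2 : ℝ) ^ (Nat.log 2 f.den) ≤ f.den := by exact_mod_cast hl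
      gcongr
  refine (measure_mono hsub).trans ((measure_biUnion_finset_le _ _).trans ?_)
  have hblock : ∀ j ∈ Finset.range K,
      volume {x : ℝ | x ∈ Icc a b ∧ ∃ f : ℚ, (f.den : ℝ) ≤ 2 * 2 ^ j ∧
        |x - f| ≤ 1 / (2 ^ j * N)} ≤
        ENNReal.ofReal (16 * ℓ / N * 2 ^ j + 2 / N * (1 / 2) ^ j) := by
    intro j _
    refine (vol_near a b (2 ^ j) (1 / (2 ^ j * N)) hab.le (by positivity)
      (by positivity)).trans ?_
    apply ENNReal.ofReal_le_ofReal
    rw [← hℓ]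
    set u : ℝ := 2 ^ j with hu
    have hu1 : 1 ≤ u := one_le_pow₀ (by norm_num)
    have hhalf : (1 / 2 : ℝ) ^ j = u⁻¹ := by rw [hu, one_div, inv_pow]
    rw [hhalf]
    have e1 : 2 * (1 / (u * N)) ≤ ℓ := by
      rw [mul_one_div, div_le_iff₀ (by positivity)]
      nlinarith
    calc (4 * u ^ 2 * (ℓ + 2 * (1 / (u * N))) + 1) * (2 * (1 / (u * N)))
        ≤ (4 * u ^ 2 * (ℓ + ℓ) + 1) * (2 * (1 / (u * N))) := by gcongr
      _ = 16 * ℓ / N * u + 2 / N * u⁻¹ := by field_simp; ring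
  refine (Finset.sum_le_sum hblock).trans ?_
  rw [← ENNReal.ofReal_sum_of_nonneg (fun _ _ => by positivity)]
  apply ENNReal.ofReal_le_ofReal
  rw [Finset.sum_add_distrib]
  have h1 := sum_half_le (2 / N) (by positivity) K
  have h2 : ∑ j ∈ Finset.range K, 16 * ℓ / N * (2 : ℝ) ^ j ≤ ℓ / 16 := by
    rw [← Finset.mul_sum, geom_sum_eq (by norm_num)]
    have h3 : ((2 : ℝ) ^ K - 1) / (2 - 1) ≤ N / 256 := by linarith
    calc 16 * ℓ / N * (((2 : ℝ) ^ K - 1) / (2 - 1)) ≤ 16 * ℓ / N * (N / 256) := by gcongr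
      _ = ℓ / 16 := by field_simp; norm_num
  have h4 : 2 * (2 / N) ≤ ℓ / 16 := by
    rw [mul_div_assoc', div_le_iff₀ hN0]; linarith
  linarith

/-! ### Nodes and the gaps around them -/

/-- The width `q ^ (-n) * q ^ (-t)` of the annulus of points at distance between
`(1 - q ^ (-t)) * q ^ (-n)` and `q ^ (-n)` from a rational of denominator `q`. -/
noncomputable def shellLen (n : ℕ) (t : ℝ) (q : ℕ) : ℝ := ((q : ℝ) ^ n)⁻¹ * (q : ℝ) ^ (-t)

/-- The inner half of the right-hand component of the annulus around the rational `f` of denominator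
`q`. Leaving out the outer half keeps the node away from the corner `f + q ^ (-n)`, which is itself
a rational, of denominator `q ^ n`. -/
noncomputable def node (n : ℕ) (t : ℝ) (f : ℚ) : Set ℝ :=
  Icc ((f : ℝ) + ((f.den : ℝ) ^ n)⁻¹ - shellLen n t f.den)
    ((f : ℝ) + ((f.den : ℝ) ^ n)⁻¹ - shellLen n t f.den / 2)

/-- Rationals, other than the centre, of denominator less than `max (q ^ (n - 1)) (q ^ t) / 2` are
automatically far from a node of denominator `q` (`gap_near_corner`); from this denominator on,
the exceptional points have to be removed by a measure estimate. -/
noncomputable def badStart (n : ℕ) (t : ℝ) (q : ℕ) : ℝ := max ((q : ℝ) ^ (n - 1)) ((q : ℝ) ^ t) / 2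

/-- The inequalities that hold for all sufficiently large denominators `q` (`eventually_largeDen`).
The field `corner` is where `t < n * (n - 1)` is needed: it says that the ball of radius
`(q ^ n) ^ (-n)` around the corner of a node does not meet the node. -/
structure LargeDen (n : ℕ) (t : ℝ) (q : ℕ) : Prop where
  two_pow : 2 ^ n ≤ q
  half : (q : ℝ) ^ (-t) ≤ 1 / 2
  corner : (((q : ℝ) ^ n) ^ n)⁻¹ ≤ shellLen n t q / 2
  start : 1000 ≤ badStart n t q
  start_pow : 1000 ≤ shellLen n t q / 2 * badStart n t q ^ n

theorem shellLen_pos (n : ℕ) (t : ℝ) (q : ℕ) (hq : 0 < q) : 0 < shellLen n t q := by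
  have : (0 : ℝ) < q := by exact_mod_cast hq
  unfold shellLen; positivity

theorem shellLen_le (n : ℕ) (t : ℝ) (ht : 0 ≤ t) (q : ℕ) (hq : 0 < q) :
    shellLen n t q ≤ ((q : ℝ) ^ n)⁻¹ := by
  have h1 : (1 : ℝ) ≤ q := by exact_mod_cast hq
  have : (q : ℝ) ^ (-t) ≤ 1 := Real.rpow_le_one_of_one_le_of_nonpos h1 (by linarith)
  have h0 : 0 < ((q : ℝ) ^ n)⁻¹ := by positivity
  unfold shellLen; nlinarith

theorem node_dist_le {n : ℕ} {t : ℝ} (ht : 0 ≤ t) {f : ℚ} {y : ℝ} (hy : y ∈ node n t f) :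
    |y - f| ≤ ((f.den : ℝ) ^ n)⁻¹ := by
  have h1 := shellLen_le n t ht f.den f.den_pos
  have h2 := shellLen_pos n t f.den f.den_pos
  obtain ⟨ha, hb⟩ := hy
  rw [abs_le]; constructor <;> linarith

theorem node_le_dist {n : ℕ} {t : ℝ} {f : ℚ} {y : ℝ} (hy : y ∈ node n t f) :
    (1 - (f.den : ℝ) ^ (-t)) * ((f.den : ℝ) ^ n)⁻¹ ≤ |y - f| := by
  refine le_trans ?_ (le_abs_self _)
  have := hy.1
  unfold shellLen at this
  linarith

/-- A rational `g ≠ f` of denominator between `q` and `q ^ (n - 1) / 2`, where `q` is the denominator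
of `f`, is at distance at least `1 / (g.den * q)` from `f`, hence cannot approximate a point that is
`q ^ (-n)`-close to `f`. -/
theorem gap_near_center {n : ℕ} (hn : 3 ≤ n) {f g : ℚ} (hne : g ≠ f) (hle : f.den ≤ g.den)
    (h2 : 2 ≤ f.den) (hup : 2 * (g.den : ℝ) ≤ (f.den : ℝ) ^ (n - 1)) {y : ℝ}
    (hy : |y - f| ≤ ((f.den : ℝ) ^ n)⁻¹) : ((g.den : ℝ) ^ n)⁻¹ ≤ |y - g| := by
  have hs := den_sep g f hne
  obtain ⟨k, rfl⟩ := Nat.exists_eq_add_of_le hn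
  have hq : (2 : ℝ) ≤ f.den := by exact_mod_cast h2
  have hqd : (f.den : ℝ) ≤ g.den := by exact_mod_cast hle
  set q : ℝ := (f.den : ℝ)
  set d : ℝ := (g.den : ℝ)
  have e : 3 + k - 1 = 2 + k := by omega
  rw [e] at hup
  have h3 : (q ^ (3 + k))⁻¹ ≤ 1 / (2 * (d * q)) := by
    rw [← one_div]
    apply one_div_le_one_div_of_le (by positivity)
    calc 2 * (d * q) = (2 * d) * q := by ring
      _ ≤ q ^ (2 + k) * q := by gcongr
      _ = q ^ (3 + k) := by ring
  have h4 : (d ^ (3 + k))⁻¹ ≤ 1 / (2 * (d * q)) := by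
    rw [← one_div]
    apply one_div_le_one_div_of_le (by positivity)
    calc 2 * (d * q) ≤ d * (d * d) := by
          have : d * q ≤ d * d := by gcongr
          nlinarith
      _ = d ^ 3 := by ring
      _ ≤ d ^ (3 + k) := pow_le_pow_right₀ (by linarith) (by omega)
  have h5 : 1 / (d * q) = 1 / (2 * (d * q)) + 1 / (2 * (d * q)) := by field_simp; norm_num
  have h6 : |(g : ℝ) - f| ≤ |y - f| + |y - g| := by
    have := abs_sub_le (g : ℝ) y f
    rw [abs_sub_comm (g : ℝ) y] at this; linarith
  linarith

/-- A rational `f` of denominator smaller than that of `g`, but at least about its `(n - 1)`-th root,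
cannot approximate a point that is `g.den ^ (-n)`-close to `g`. -/
theorem gap_before {n : ℕ} (hn : 3 ≤ n) {f g : ℚ} (hlt : f.den < g.den)
    (hlow : 2 * (g.den : ℝ) ≤ (f.den : ℝ) ^ (n - 1)) {y : ℝ}
    (hy : |y - g| ≤ ((g.den : ℝ) ^ n)⁻¹) : ((f.den : ℝ) ^ n)⁻¹ ≤ |y - f| := by
  have hne : f ≠ g := by rintro rfl; exact lt_irrefl _ hlt
  have hs := den_sep f g hne
  obtain ⟨k, rfl⟩ := Nat.exists_eq_add_of_le hn
  have hd : (1 : ℝ) ≤ f.den := by exact_mod_cast f.den_pos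
  have hqd : (f.den : ℝ) + 1 ≤ g.den := by exact_mod_cast hlt
  set d : ℝ := (f.den : ℝ)
  set q : ℝ := (g.den : ℝ)
  have e : 3 + k - 1 = 2 + k := by omega
  rw [e] at hlow
  have hq0 : 0 < q := by linarith
  have h3 : (q ^ (3 + k))⁻¹ ≤ 1 / (2 * (d * q)) := by
    rw [← one_div]
    apply one_div_le_one_div_of_le (by positivity)
    calc 2 * (d * q) ≤ q * (q * q) := by nlinarith
      _ = q ^ 3 := by ring
      _ ≤ q ^ (3 + k) := pow_le_pow_right₀ (by linarith) (by omega)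
  have h4 : (d ^ (3 + k))⁻¹ ≤ 1 / (2 * (d * q)) := by
    rw [← one_div]
    apply one_div_le_one_div_of_le (by positivity)
    calc 2 * (d * q) = (2 * q) * d := by ring
      _ ≤ d ^ (2 + k) * d := by gcongr
      _ = d ^ (3 + k) := by ring
  have h5 : 1 / (d * q) = 1 / (2 * (d * q)) + 1 / (2 * (d * q)) := by field_simp; norm_num
  have h6 : |(f : ℝ) - g| ≤ |y - g| + |y - f| := by
    have := abs_sub_le (f : ℝ) y g
    rw [abs_sub_comm (f : ℝ) y] at this; linarith
  linarith

/-- The corner `f + q ^ (-n)` is in lowest terms with denominator `q ^ n`; integrality of `n` enters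
here. -/
theorem corner_den (n : ℕ) (hn : 2 ≤ n) (f : ℚ) :
    (f + 1 / (f.den : ℚ) ^ n).den = f.den ^ n := by
  obtain ⟨k, rfl⟩ := Nat.exists_eq_add_of_le' hn
  have hq : (f.den : ℚ) ≠ 0 := by exact_mod_cast f.den_ne_zero
  have e : f + 1 / (f.den : ℚ) ^ (k + 2) =
      ((f.num * (f.den : ℤ) ^ (k + 1) + 1 : ℤ) : ℚ) / (((f.den : ℤ) ^ (k + 2) : ℤ) : ℚ) := by
    have hfd : f * f.den = f.num := Rat.mul_den_eq_num f
    push_cast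
    rw [← hfd]
    field_simp
    ring
  have hcop : IsCoprime (f.num * (f.den : ℤ) ^ (k + 1) + 1) ((f.den : ℤ) ^ (k + 2)) := by
    apply IsCoprime.pow_right
    exact ⟨1, -(f.num * (f.den : ℤ) ^ k), by ring⟩
  have h := Rat.den_div_eq_of_coprime (a := f.num * (f.den : ℤ) ^ (k + 1) + 1)
    (b := (f.den : ℤ) ^ (k + 2)) (by have := f.den_pos; positivity)
    (Int.isCoprime_iff_nat_coprime.1 hcop)
  rw [← e] at h
  exact_mod_cast h

/-- No rational `g ≠ f` of denominator in `[q, badStart n t q)` approximates a point of the node of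
`f`. Beyond the range of `gap_near_center` the corner takes over the role of the centre: a rational
other than the corner is at distance at least `1 / (g.den * q ^ n)` from it, whereas the node lies
within `q ^ (-n - t)` of it. -/
theorem gap_near_corner {n : ℕ} (hn : 3 ≤ n) {t : ℝ} {f g : ℚ}
    (hf : LargeDen n t f.den) (hne : g ≠ f)
    (hle : f.den ≤ g.den) (hup : (g.den : ℝ) < badStart n t f.den) (ht : 0 < t) {y : ℝ}
    (hy : y ∈ node n t f) : ((g.den : ℝ) ^ n)⁻¹ ≤ |y - g| := by
  have h2 : 2 ≤ f.den := le_trans (by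
    calc 2 = 2 ^ 1 := rfl
      _ ≤ 2 ^ n := Nat.pow_le_pow_right (by norm_num) (by omega)) hf.two_pow
  by_cases hc : 2 * (g.den : ℝ) ≤ (f.den : ℝ) ^ (n - 1)
  · exact gap_near_center hn hne hle h2 hc (node_dist_le ht.le hy)
  push Not at hc
  have hct : 2 * (g.den : ℝ) < (f.den : ℝ) ^ t := by
    unfold badStart at hup
    rw [lt_div_iff₀ (by norm_num), mul_comm, lt_max_iff] at hup
    rcases hup with h | h
    · linarith
    · exact h
  set r : ℚ := f + 1 / (f.den : ℚ) ^ n with hr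
  have hrc : (r : ℝ) = f + ((f.den : ℝ) ^ n)⁻¹ := by rw [hr]; push_cast; rw [one_div]
  have hrden : r.den = f.den ^ n := corner_den n (by omega) f
  have hlp := shellLen_pos n t f.den f.den_pos
  by_cases hgr : g = r
  · rw [hgr, hrden, hrc]
    push_cast
    refine hf.corner.trans ?_
    rw [abs_sub_comm]
    refine le_trans ?_ (le_abs_self _)
    have := hy.2
    linarith
  have hs := den_sep g r hgr
  rw [hrden] at hs
  push_cast at hs
  have hyr : |y - r| ≤ shellLen n t f.den := by
    rw [hrc, abs_le]; constructor <;> linarith [hy.1, hy.2]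
  have hq : (2 : ℝ) ≤ f.den := by exact_mod_cast h2
  have hd0 : (0 : ℝ) < g.den := by exact_mod_cast g.den_pos
  have htp : (2 : ℝ) ^ n ≤ f.den := by exact_mod_cast hf.two_pow
  have hlen : shellLen n t f.den ≤ 1 / (2 * (g.den * (f.den : ℝ) ^ n)) := by
    unfold shellLen
    rw [Real.rpow_neg (by positivity), ← mul_inv, ← one_div]
    apply one_div_le_one_div_of_le (by positivity)
    calc 2 * ((g.den : ℝ) * (f.den : ℝ) ^ n) = (f.den : ℝ) ^ n * (2 * g.den) := by ring
      _ ≤ _ := by gcongr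
  have hpow : 2 * (f.den : ℝ) ^ n ≤ (g.den : ℝ) ^ (n - 1) := by
    obtain ⟨k, rfl⟩ := Nat.exists_eq_add_of_le hn
    have e : 3 + k - 1 = 2 + k := by omega
    rw [e] at hc ⊢
    have h1 : ((f.den : ℝ) ^ (2 + k)) ^ (2 + k) ≤ (2 * (g.den : ℝ)) ^ (2 + k) := by gcongr
    have h3 : (f.den : ℝ) ^ (3 + k) * f.den ≤ ((f.den : ℝ) ^ (2 + k)) ^ (2 + k) := by
      rw [← pow_mul, ← pow_succ]
      apply pow_le_pow_right₀ (by linarith)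
      nlinarith
    have h4 : (f.den : ℝ) ^ (3 + k) * 2 ^ (3 + k) ≤ (f.den : ℝ) ^ (3 + k) * f.den := by gcongr
    have h5 : (f.den : ℝ) ^ (3 + k) * 2 ^ (3 + k) ≤ (2 * (g.den : ℝ)) ^ (2 + k) := by linarith
    rw [mul_pow] at h5
    have h6 : (0:ℝ) < 2 ^ (2 + k) := by positivity
    have h7 : (f.den : ℝ) ^ (3 + k) * 2 ^ (3 + k) = 2 ^ (2 + k) * (2 * (f.den : ℝ) ^ (3 + k)) := by
      ring
    rw [h7] at h5
    exact le_of_mul_le_mul_left h5 h6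
  have h4 : ((g.den : ℝ) ^ n)⁻¹ ≤ 1 / (2 * (g.den * (f.den : ℝ) ^ n)) := by
    rw [← one_div]
    apply one_div_le_one_div_of_le (by positivity)
    have e : (g.den : ℝ) ^ n = g.den ^ (n - 1) * g.den := by
      rw [← pow_succ]; congr 1; omega
    rw [e]
    calc 2 * ((g.den : ℝ) * (f.den : ℝ) ^ n) = (2 * (f.den : ℝ) ^ n) * g.den := by ring
      _ ≤ _ := by gcongr
  have h5 : 1 / ((g.den : ℝ) * (f.den : ℝ) ^ n) = 1 / (2 * (g.den * (f.den : ℝ) ^ n))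
      + 1 / (2 * (g.den * (f.den : ℝ) ^ n)) := by field_simp; norm_num
  have h6 : |(g : ℝ) - r| ≤ |y - r| + |y - g| := by
    have := abs_sub_le (g : ℝ) y r
    rw [abs_sub_comm (g : ℝ) y] at this; linarith
  linarith

/-- The points of `[a, b]` within `2 * d ^ (-n)` of some rational whose denominator `d` is in
`[D, M * D)`. The factor `2` leaves room for replacing such a point by a nearby one. -/
def badPow (n : ℕ) (D M a b : ℝ) : Set ℝ :=
  {x : ℝ | x ∈ Icc a b ∧ ∃ f : ℚ, D ≤ f.den ∧ (f.den : ℝ) < M * D ∧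
      |x - f| ≤ 2 * ((f.den : ℝ) ^ n)⁻¹}

/-- If `g`, of denominator of order `N`, is Dirichlet-close to a point `x` in the middle of the node of
`f` which avoids `badPow`, then the node of `g` is contained in that of `f`, and no rational with
denominator in `[f.den, g.den)` other than `f` approximates a point of it. -/
theorem step_geometry {n : ℕ} (hn : 3 ≤ n) {t : ℝ} (ht : 0 < t) {f g : ℚ}
    (hf : LargeDen n t f.den) {N : ℝ} (hN : 2 ^ 27 ≤ N) (hℓ : 1000 ≤ shellLen n t f.den / 2 * N)
    (hg1 : N / 256 ≤ g.den) (hg2 : (g.den : ℝ) ≤ N) {x a b : ℝ}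
    (ha : a = (f : ℝ) + ((f.den : ℝ) ^ n)⁻¹ - shellLen n t f.den)
    (hb : b = (f : ℝ) + ((f.den : ℝ) ^ n)⁻¹ - shellLen n t f.den / 2)
    (hx : x ∈ Icc (a + (b - a) / 8) (b - (b - a) / 8)) (hxg : |x - g| ≤ 256 / N ^ 2)
    (hbad : x ∉ badPow n (badStart n t f.den) N a b) :
    (∀ y ∈ node n t g, |y - g| ≤ 1 / (8 * N ^ 2)) ∧ node n t g ⊆ node n t f ∧
    ∀ g' : ℚ, g' ≠ f → f.den ≤ g'.den → g'.den < g.den → ∀ y ∈ node n t g,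
      ((g'.den : ℝ) ^ n)⁻¹ ≤ |y - g'| := by
  have hN0 : 0 < N := by linarith [show (0:ℝ) < 2 ^ 27 by norm_num]
  have hlp := shellLen_pos n t f.den f.den_pos
  have hba : b - a = shellLen n t f.den / 2 := by rw [ha, hb]; ring
  have hg0 : (1 : ℝ) ≤ g.den := by exact_mod_cast g.den_pos
  have hsmall : ∀ y ∈ node n t g, |y - g| ≤ 1 / (8 * N ^ 2) := by
    intro y hy
    refine (node_dist_le ht.le hy).trans ?_
    rw [← one_div]
    apply one_div_le_one_div_of_le (by positivity)
    calc 8 * N ^ 2 ≤ (N / 256) ^ 3 := by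
          have : (N / 256) ^ 3 = N ^ 2 * (N / 2 ^ 24) := by ring
          rw [this, mul_comm]; gcongr
          rw [le_div_iff₀ (by norm_num)]; norm_num at hN ⊢; linarith
      _ ≤ (g.den : ℝ) ^ 3 := by gcongr
      _ ≤ (g.den : ℝ) ^ n := pow_le_pow_right₀ hg0 hn
  have hN2 : 257 / N ^ 2 ≤ (b - a) / 8 := by
    rw [hba, div_le_iff₀ (by positivity)]
    have : (shellLen n t f.den / 2 / 8) * N ^ 2 = (shellLen n t f.den / 2 * N) * N / 8 := by ring
    rw [this]
    nlinarith [show (1:ℝ) ≤ 2 ^ 27 by norm_num]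
  have h18 : 1 / (8 * N ^ 2) = (1 / 8) * (1 / N ^ 2) := by ring
  have h256 : 256 / N ^ 2 = 256 * (1 / N ^ 2) := by ring
  have h257 : 257 / N ^ 2 = 257 * (1 / N ^ 2) := by ring
  have hi0 : 0 < 1 / N ^ 2 := by positivity
  rw [h257] at hN2
  have hdist : ∀ y ∈ node n t g, |y - x| ≤ 257 * (1 / N ^ 2) := by
    intro y hy
    have h1 := hsmall y hy
    have := abs_sub_le y g x
    rw [abs_sub_comm (g : ℝ) x] at this
    linarith
  have hsub : node n t g ⊆ node n t f := by
    intro y hy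
    have := abs_le.1 (hdist y hy)
    unfold node
    rw [← ha, ← hb]
    constructor <;> linarith [hx.1, hx.2]
  refine ⟨hsmall, hsub, ?_⟩
  intro g' hne hle hlt y hy
  by_cases h1 : (g'.den : ℝ) < badStart n t f.den
  · exact gap_near_corner hn hf hne hle h1 ht (hsub hy)
  push Not at h1
  have hltR : (g'.den : ℝ) < g.den := by exact_mod_cast hlt
  by_cases h2 : 2 * (g.den : ℝ) ≤ (g'.den : ℝ) ^ (n - 1)
  · exact gap_before hn hlt h2 (node_dist_le ht.le hy)
  push Not at h2
  have hd1 : (1 : ℝ) ≤ g'.den := by exact_mod_cast g'.den_pos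
  have hst := hf.start
  have hx2 : 2 * ((g'.den : ℝ) ^ n)⁻¹ < |x - g'| := by
    by_contra hcon
    push Not at hcon
    refine hbad ⟨⟨by linarith [hx.1], by linarith [hx.2]⟩, g', h1, ?_, hcon⟩
    nlinarith
  have hpow : (257 * (1 / N ^ 2)) ≤ ((g'.den : ℝ) ^ n)⁻¹ := by
    rw [mul_one_div, le_inv_comm₀ (by positivity) (by positivity), inv_div]
    have e : (g'.den : ℝ) ^ n = g'.den ^ (n - 1) * g'.den := by
      rw [← pow_succ]; congr 1; omega
    have h3 : (g'.den : ℝ) ^ 2 ≤ 2 * N :=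
      (pow_le_pow_right₀ hd1 (by omega : 2 ≤ n - 1)).trans (by linarith)
    have h4 : (g'.den : ℝ) ^ (n - 1) ≤ 2 * N := by linarith
    refine (sq_le_sq₀ (by positivity) (by positivity)).1 ?_
    rw [e, mul_pow]
    calc ((g'.den : ℝ) ^ (n - 1)) ^ 2 * (g'.den : ℝ) ^ 2 ≤ (2 * N) ^ 2 * (2 * N) := by gcongr
      _ = 8 * N ^ 3 := by ring
      _ ≤ N ^ 3 * (N / 257 ^ 2) := by
        rw [mul_comm]; gcongr; rw [le_div_iff₀ (by norm_num)]; norm_num at hN ⊢; linarith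
      _ = (N ^ 2 / 257) ^ 2 := by ring
  have h7 := hdist y hy
  have h8 : |x - g'| ≤ |y - x| + |y - g'| := by
    have := abs_sub_le x y g'
    rw [abs_sub_comm x y] at this; linarith
  linarith

/-! ### Choice of parameters -/

theorem shellLen_eq_rpow (n : ℕ) (t : ℝ) (q : ℕ) (hq : 0 < q) :
    shellLen n t q = (q : ℝ) ^ (-((n : ℝ) + t)) := by
  have h : (0 : ℝ) < q := by exact_mod_cast hq
  unfold shellLen
  rw [neg_add, Real.rpow_add h, Real.rpow_neg h.le (n : ℝ), Real.rpow_natCast]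

theorem eventually_rpow_ge {e : ℝ} (he : 0 < e) (C : ℝ) : ∀ᶠ q : ℕ in atTop, C ≤ (q : ℝ) ^ e :=
  ((tendsto_rpow_atTop he).comp tendsto_natCast_atTop_atTop).eventually_ge_atTop C

/-- The exponent in `start_pow` is positive because `max (n - 1) t * n > n + t`: if `t` is below
`n * (n - 2)` the term `n - 1` suffices, otherwise the term `t` does. -/
theorem eventually_largeDen {n : ℕ} (hn : 3 ≤ n) {t : ℝ} (ht : 0 < t)
    (htn : t < (n : ℝ) * ((n : ℝ) - 1)) : ∀ᶠ q : ℕ in atTop, LargeDen n t q := by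
  have hnR : (3 : ℝ) ≤ n := by exact_mod_cast hn
  set e : ℝ := max ((n : ℝ) - 1) t with he
  have he1 : (n : ℝ) - 1 ≤ e := le_max_left _ _
  have he2 : t ≤ e := le_max_right _ _
  have hexp : 0 < e * n - (n + t) := by
    rcases lt_or_ge t ((n : ℝ) * (n - 2)) with h | h
    · nlinarith
    · nlinarith
  filter_upwards [eventually_ge_atTop (2 ^ n), eventually_rpow_ge ht 2,
    eventually_rpow_ge (show 0 < (n : ℝ) * n - (n + t) by nlinarith) 2,
    eventually_rpow_ge (show 0 < e by linarith) 2000,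
    eventually_rpow_ge hexp (2 * 1000 * 2 ^ n)] with q h1 h2 h3 h4 h5
  have hq0 : 0 < q := lt_of_lt_of_le (by positivity) h1
  have hq : (0 : ℝ) < q := by exact_mod_cast hq0
  have hq1 : (1 : ℝ) ≤ q := by exact_mod_cast hq0
  have hstart : badStart n t q = (q : ℝ) ^ e / 2 := by
    unfold badStart
    congr 1
    have : (q : ℝ) ^ (n - 1) = (q : ℝ) ^ ((n : ℝ) - 1) := by
      rw [← Real.rpow_natCast]; congr 1; push_cast [Nat.cast_sub (by omega : 1 ≤ n)]; ring
    rw [this, he]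
    exact ((Real.monotone_rpow_of_base_ge_one hq1).map_max).symm
  refine ⟨h1, ?_, ?_, ?_, ?_⟩
  · rw [Real.rpow_neg hq.le, ← one_div]
    exact one_div_le_one_div_of_le (by norm_num) h2
  · rw [shellLen_eq_rpow n t q hq0]
    have e1 : (((q : ℝ) ^ n) ^ n)⁻¹ = (q : ℝ) ^ (-((n : ℝ) * n)) := by
      rw [Real.rpow_neg hq.le, Real.rpow_mul hq.le, Real.rpow_natCast, Real.rpow_natCast]
    have e2 : (q : ℝ) ^ (-((n : ℝ) + t)) = (q : ℝ) ^ ((n : ℝ) * n - (n + t)) *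
        (q : ℝ) ^ (-((n : ℝ) * n)) := by
      rw [← Real.rpow_add hq]; congr 1; ring
    rw [e1, e2]
    have : 0 < (q : ℝ) ^ (-((n : ℝ) * n)) := by positivity
    nlinarith
  · rw [hstart]; linarith
  · rw [hstart, shellLen_eq_rpow n t q hq0, div_pow]
    have e3 : (q : ℝ) ^ (e * n - (n + t)) = (q : ℝ) ^ (-((n : ℝ) + t)) * ((q : ℝ) ^ e) ^ n := by
      rw [← Real.rpow_natCast, ← Real.rpow_mul hq.le, ← Real.rpow_add hq]; congr 1; ring
    have e4 : (q : ℝ) ^ (-((n : ℝ) + t)) / 2 * (((q : ℝ) ^ e) ^ n / 2 ^ n) =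
      ((q : ℝ) ^ (e * n - (n + t))) / (2 * 2 ^ n) := by rw [e3]; field_simp
    rw [e4, le_div_iff₀ (by positivity)]
    linarith

/-- Choice of the scale `N = 2 ^ m` of the children's denominators. As `s * (n + t) < 2`, the total
`s`-weight `ℓ * N ^ 2 * (N ^ (-n - t)) ^ s` of `ℓ * N ^ 2` children beats any multiple of `ℓ ^ s`. -/
theorem exists_scale (n : ℕ) (t : ℝ) {s : ℝ} (hs : s * (n + t) < 2) {ℓ : ℝ}
    (hℓ : 0 < ℓ) (q : ℕ) : ∃ m : ℕ, 27 ≤ m ∧ 256 * q < 2 ^ m ∧ 1000 ≤ ℓ * 2 ^ m ∧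
      2000 * ℓ ^ s ≤ ℓ * (2 ^ m) ^ 2 * (shellLen n t (2 ^ m) / 2) ^ s := by
  have hT : Tendsto (fun m : ℕ => (2 : ℕ) ^ m) atTop atTop :=
    tendsto_pow_atTop_atTop_of_one_lt (by norm_num)
  have hTR : Tendsto (fun m : ℕ => (((2 : ℕ) ^ m : ℕ) : ℝ)) atTop atTop :=
    tendsto_natCast_atTop_atTop.comp hT
  have h4 := hT.eventually
    (eventually_rpow_ge (show 0 < 2 - s * (n + t) by linarith) (2000 * ℓ ^ s / ℓ * 2 ^ s))
  obtain ⟨m, h1, h2, h3, h4⟩ := ((eventually_ge_atTop 27).and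
    ((hT.eventually_gt_atTop (256 * q)).and ((hTR.eventually_ge_atTop (1000 / ℓ)).and h4))).exists
  refine ⟨m, h1, h2, ?_, ?_⟩
  · rw [div_le_iff₀ hℓ] at h3; push_cast at h3; linarith
  · rw [shellLen_eq_rpow n t _ (by positivity)]
    have hp : (0 : ℝ) < ((2 ^ m : ℕ) : ℝ) := by positivity
    have e : ((2 : ℝ) ^ m) ^ 2 = ((2 ^ m : ℕ) : ℝ) ^ (2 : ℝ) := by push_cast; norm_cast
    rw [e]
    set N : ℝ := ((2 ^ m : ℕ) : ℝ)
    rw [Real.div_rpow (by positivity) (by norm_num), ← Real.rpow_mul hp.le]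
    have e2 : N ^ (2 - s * (n + t)) = N ^ (2 : ℝ) * N ^ (-((n : ℝ) + t) * s) := by
      rw [← Real.rpow_add hp]; congr 1; ring
    rw [e2] at h4
    have h2s : (0 : ℝ) < 2 ^ s := by positivity
    calc 2000 * ℓ ^ s = ℓ / 2 ^ s * (2000 * ℓ ^ s / ℓ * 2 ^ s) := by field_simp
      _ ≤ ℓ / 2 ^ s * (N ^ (2 : ℝ) * N ^ (-((n : ℝ) + t) * s)) := by gcongr
      _ = _ := by field_simp

/-! ### The inductive step against a cover -/

/-- The indices of the balls with centres `a i` and radii `r i` that meet `J`. -/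
def hits (a r : ℕ → ℝ) (J : Set ℝ) : Set ℕ := {i | (Metric.closedBall (a i) (r i) ∩ J).Nonempty}

/-- The `s`-weight `∑ r i ^ s` of the balls meeting `J`. -/
noncomputable def hitSum (a r : ℕ → ℝ) (s : ℝ) (J : Set ℝ) : ℝ≥0∞ :=
  ∑' i, (hits a r J).indicator (fun i => ENNReal.ofReal (r i ^ s)) i

/-- If the balls meeting `J` have small `s`-weight compared with `ℓ ^ s`, then their enlargements cover
little of an interval of length `ℓ`, because each radius is at most `ℓ` and `s < 1`.
The factor `1026` is the one with which a ball of radius at least `1 / (4 * N ^ 2)` meeting a child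
in `exists_child` is seen to reach, once enlarged, the point of the parent node near that child. -/
theorem vol_hits_le (a r : ℕ → ℝ) (hr : ∀ i, 0 < r i) {s ℓ : ℝ} (hs0 : 0 < s) (hs1 : s < 1)
    (hℓ : 0 < ℓ) (J : Set ℝ) (hJ : hitSum a r s J ≤ ENNReal.ofReal (1 / 20000 * ℓ ^ s)) :
    volume {x : ℝ | ∃ i ∈ hits a r J, |x - a i| ≤ 1026 * r i} ≤ ENNReal.ofReal (ℓ / 8) := by
  have hsub : {x : ℝ | ∃ i ∈ hits a r J, |x - a i| ≤ 1026 * r i} ⊆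
      ⋃ i, {x | i ∈ hits a r J ∧ x ∈ Metric.closedBall (a i) (1026 * r i)} := by
    rintro x ⟨i, hi, hx⟩
    exact mem_iUnion.2 ⟨i, hi, by rwa [Metric.mem_closedBall, Real.dist_eq]⟩
  refine (measure_mono hsub).trans ((measure_iUnion_le _).trans ?_)
  have hterm : ∀ i, volume {x | i ∈ hits a r J ∧ x ∈ Metric.closedBall (a i) (1026 * r i)} ≤
      ENNReal.ofReal (2052 * ℓ ^ (1 - s)) *
        (hits a r J).indicator (fun i => ENNReal.ofReal (r i ^ s)) i := by
    intro i
    by_cases hi : i ∈ hits a r J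
    · have hri := hr i
      have h1 : ENNReal.ofReal (r i ^ s) ≤ ENNReal.ofReal (1 / 20000 * ℓ ^ s) := by
        refine le_trans ?_ hJ
        have := ENNReal.le_tsum (f := (hits a r J).indicator (fun i => ENNReal.ofReal (r i ^ s))) i
        rwa [indicator_of_mem hi] at this
      rw [ENNReal.ofReal_le_ofReal_iff (by positivity)] at h1
      have hls : 0 < ℓ ^ s := by positivity
      have h2 : r i ≤ ℓ := (Real.rpow_le_rpow_iff hri.le hℓ.le hs0).1 (by linarith)
      have h3 : r i ≤ ℓ ^ (1 - s) * r i ^ s := by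
        calc r i = r i ^ (1 - s) * r i ^ s := by
              rw [← Real.rpow_add hri]; simp
          _ ≤ _ := by gcongr
      rw [indicator_of_mem hi, ← ENNReal.ofReal_mul (by positivity)]
      simp only [hi, true_and, ofPred_mem_eq]
      rw [Real.volume_closedBall]
      apply ENNReal.ofReal_le_ofReal
      linarith
    · simp [hi]
  refine (ENNReal.tsum_le_tsum hterm).trans ?_
  rw [ENNReal.tsum_mul_left]
  change _ * hitSum a r s J ≤ _
  refine (mul_le_mul_right hJ _).trans ?_
  rw [← ENNReal.ofReal_mul (by positivity)]
  apply ENNReal.ofReal_le_ofReal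
  have e : ℓ ^ (1 - s) * ℓ ^ s = ℓ := by rw [← Real.rpow_add hℓ]; simp
  calc 2052 * ℓ ^ (1 - s) * (1 / 20000 * ℓ ^ s) = 2052 / 20000 * (ℓ ^ (1 - s) * ℓ ^ s) := by ring
    _ ≤ ℓ / 8 := by rw [e]; linarith

/-- Inductive step. If the balls meeting the node of `f` have small `s`-weight relative to the size of
the node, the same holds for some child node. After removing three sets of measure at most `ℓ / 8`
(points near rationals of intermediate denominator, points with a small Dirichlet denominator, points
near the balls) Dirichlet's theorem gives at least `ℓ * N ^ 2 / 2000` children. A ball that meets a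
child meets no other, so the `s`-weights of the children add up to at most that of `f`, and not all
of them can be large. -/
theorem exists_child {n : ℕ} (hn : 3 ≤ n) {t : ℝ} (ht : 0 < t) {s : ℝ} (hs0 : 0 < s) (hs1 : s < 1)
    (hs : s * (n + t) < 2) (c r : ℕ → ℝ) (hr : ∀ i, 0 < r i) (f : ℚ) (hf : LargeDen n t f.den)
    (hhit : hitSum c r s (node n t f) ≤
      ENNReal.ofReal (1 / 20000 * (shellLen n t f.den / 2) ^ s)) :
    ∃ g : ℚ, f.den < g.den ∧ node n t g ⊆ node n t f ∧
      hitSum c r s (node n t g) ≤ ENNReal.ofReal (1 / 20000 * (shellLen n t g.den / 2) ^ s) ∧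
      ∀ g' : ℚ, g' ≠ f → f.den ≤ g'.den → g'.den < g.den → ∀ y ∈ node n t g,
        ((g'.den : ℝ) ^ n)⁻¹ ≤ |y - g'| := by
  classical
  have hlp := shellLen_pos n t f.den f.den_pos
  set ℓ := shellLen n t f.den / 2 with hℓdef
  have hℓ : 0 < ℓ := by positivity
  obtain ⟨m, hm, hmq, hmℓ, hmh⟩ := exists_scale n t hs hℓ f.den
  obtain ⟨k, rfl⟩ : ∃ k, m = k + 8 := ⟨m - 8, by omega⟩
  set N : ℝ := 2 ^ (k + 8) with hN
  have hN27 : (2 : ℝ) ^ 27 ≤ N := pow_le_pow_right₀ (by norm_num) hm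
  have hN0 : 0 < N := by positivity
  have hNk : N = 256 * 2 ^ k := by rw [hN, pow_add]; norm_num; ring
  set a := (f : ℝ) + ((f.den : ℝ) ^ n)⁻¹ - shellLen n t f.den with ha
  set b := (f : ℝ) + ((f.den : ℝ) ^ n)⁻¹ - shellLen n t f.den / 2 with hb
  have hba : b - a = ℓ := by rw [ha, hb, hℓdef]; ring
  have hab : a < b := by linarith
  set D := badStart n t f.den with hD
  have hV1 : volume (badPow n D N a b) ≤ ENNReal.ofReal (ℓ / 8) := by
    rw [← hba]
    exact vol_bad_powers n (k + 8) hn a b D hab hf.start (by rw [hba]; exact hf.start_pow)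
  set B2 := {x : ℝ | x ∈ Icc a b ∧ ∃ f : ℚ, f.den < 2 ^ k ∧ |x - f| ≤ 1 / (f.den * N)} with hB2
  have hV2 : volume B2 ≤ ENNReal.ofReal (ℓ / 8) := by
    rw [← hba]
    exact vol_bad_dirichlet k a b N hab hNk.ge (by rw [hba]; exact hmℓ)
  set B3 := {x : ℝ | ∃ i ∈ hits c r (node n t f), |x - c i| ≤ 1026 * r i} with hB3
  have hV3 : volume B3 ≤ ENNReal.ofReal (ℓ / 8) := vol_hits_le c r hr hs0 hs1 hℓ _ hhit
  -- the candidate children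
  set F : Set ℚ := {g | N / 256 ≤ (g.den : ℝ) ∧ (g.den : ℝ) ≤ N ∧
    ∃ x ∈ Icc (a + (b - a) / 8) (b - (b - a) / 8), |x - g| ≤ 256 / N ^ 2 ∧
      x ∉ badPow n D N a b ∧ x ∉ B3} with hF
  have hFfin : F.Finite := by
    have h256 : 0 ≤ 256 / N ^ 2 := by positivity
    refine (rat_count (a - 256 / N ^ 2) (b + 256 / N ^ 2) N (by linarith) hN0).1.subset ?_
    rintro g ⟨_, hg2, x, hx, hxg, _⟩
    have := abs_le.1 hxg
    refine ⟨?_, ?_, hg2⟩ <;> linarith [hx.1, hx.2]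
  have hcover : Icc (a + (b - a) / 8) (b - (b - a) / 8) ⊆
      (⋃ g ∈ hFfin.toFinset, Metric.closedBall (g : ℝ) (256 / N ^ 2)) ∪
        (badPow n D N a b ∪ (B2 ∪ B3)) := by
    intro x hx
    by_cases h1 : x ∈ badPow n D N a b
    · exact Or.inr (Or.inl h1)
    by_cases h2 : x ∈ B2
    · exact Or.inr (Or.inr (Or.inl h2))
    by_cases h3 : x ∈ B3
    · exact Or.inr (Or.inr (Or.inr h3))
    left
    obtain ⟨g, hg1, hg2⟩ := Real.exists_rat_abs_sub_le_and_den_le x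
      (n := 2 ^ (k + 8)) (by positivity)
    have hg0 : (0 : ℝ) < g.den := by exact_mod_cast g.den_pos
    have hg3 : |x - g| ≤ 1 / (g.den * N) := by
      refine hg1.trans (one_div_le_one_div_of_le (by positivity) ?_)
      push_cast
      rw [mul_comm]; gcongr; linarith
    have hg4 : 2 ^ k ≤ g.den := by
      by_contra hcon
      exact h2 ⟨⟨by linarith [hx.1], by linarith [hx.2]⟩, g, not_le.1 hcon, hg3⟩
    have hg5 : N / 256 ≤ g.den := by
      have : (2 : ℝ) ^ k ≤ g.den := by exact_mod_cast hg4
      rw [hNk]; linarith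
    have hg6 : |x - g| ≤ 256 / N ^ 2 := by
      refine hg3.trans ?_
      calc 1 / (g.den * N) ≤ 1 / (N / 256 * N) := by gcongr
        _ = 256 / N ^ 2 := by field_simp
    simp only [mem_iUnion, Set.Finite.mem_toFinset]
    exact ⟨g, ⟨hg5, by rw [hN]; exact_mod_cast hg2, x, hx, hg6, h1, h3⟩,
      by rwa [Metric.mem_closedBall, Real.dist_eq]⟩
  have hcount : ℓ * N ^ 2 ≤ 2000 * (hFfin.toFinset.card : ℝ) := by
    have h1 := (measure_mono hcover (μ := volume)).trans ((measure_union_le _ _).trans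
      (add_le_add (measure_biUnion_finset_le _ _) ((measure_union_le _ _).trans
        (add_le_add hV1 ((measure_union_le _ _).trans (add_le_add hV2 hV3))))))
    simp only [Real.volume_closedBall, Finset.sum_const, nsmul_eq_mul, Real.volume_Icc] at h1
    rw [← ENNReal.ofReal_natCast, ← ENNReal.ofReal_mul (by positivity),
      ← ENNReal.ofReal_add (by positivity) (by positivity),
      ← ENNReal.ofReal_add (by positivity) (by positivity),
      ← ENNReal.ofReal_add (by positivity) (by positivity),
      ENNReal.ofReal_le_ofReal_iff (by positivity), hba] at h1
    have h2 : 3 / 8 * ℓ ≤ hFfin.toFinset.card * 512 / N ^ 2 := by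
      have : (hFfin.toFinset.card : ℝ) * 512 / N ^ 2 =
        hFfin.toFinset.card * (2 * (256 / N ^ 2)) := by ring
      rw [this]; linarith
    rw [le_div_iff₀ (by positivity)] at h2
    nlinarith
  have hgeom : ∀ g ∈ F, f.den < g.den ∧ (∀ y ∈ node n t g, |y - g| ≤ 1 / (8 * N ^ 2)) ∧
      node n t g ⊆ node n t f ∧
      ∀ g' : ℚ, g' ≠ f → f.den ≤ g'.den → g'.den < g.den → ∀ y ∈ node n t g,
        ((g'.den : ℝ) ^ n)⁻¹ ≤ |y - g'| := by
    rintro g ⟨hg1, hg2, x, hx, hxg, hxb, _⟩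
    refine ⟨?_, step_geometry hn ht hf hN27 hmℓ hg1 hg2 ha hb hx hxg hxb⟩
    have h1 : (256 * f.den : ℝ) < N := by rw [hN]; exact_mod_cast hmq
    have : (f.den : ℝ) < g.den := by linarith
    exact_mod_cast this
  have hi0 : 0 < 1 / N ^ 2 := by positivity
  have h18 : 1 / (8 * N ^ 2) = (1 / 8) * (1 / N ^ 2) := by ring
  have h256 : 256 / N ^ 2 = 256 * (1 / N ^ 2) := by ring
  -- a ball meeting a child is too small to meet two of them
  have hsmall : ∀ g ∈ F, ∀ i ∈ hits c r (node n t g), r i < 1 / 4 * (1 / N ^ 2) := by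
    intro g hg i hi
    obtain ⟨_, hd, hsub, _⟩ := hgeom g hg
    obtain ⟨_, _, x, hx, hxg, _, hx3⟩ := hg
    obtain ⟨y, hy1, hy2⟩ := hi
    by_contra hcon
    push Not at hcon
    refine hx3 ⟨i, ⟨y, hy1, hsub hy2⟩, ?_⟩
    rw [Metric.mem_closedBall, Real.dist_eq] at hy1
    have e1 := abs_sub_le x g (c i)
    have e2 := abs_sub_le (g : ℝ) y (c i)
    have e3 := hd y hy2
    rw [abs_sub_comm y] at e3
    linarith
  have hunique : ∀ g ∈ F, ∀ g' ∈ F, ∀ i, i ∈ hits c r (node n t g) → i ∈ hits c r (node n t g') →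
      g = g' := by
    intro g hg g' hg' i hi hi'
    by_contra hne
    have hri := hsmall g hg i hi
    obtain ⟨y, hy1, hy2⟩ := hi
    obtain ⟨y', hy1', hy2'⟩ := hi'
    rw [Metric.mem_closedBall, Real.dist_eq] at hy1 hy1'
    have d1 := (hgeom g hg).2.1 y hy2
    have d2 := (hgeom g' hg').2.1 y' hy2'
    have hsep : 1 / N ^ 2 ≤ |(g : ℝ) - g'| := by
      refine le_trans (one_div_le_one_div_of_le ?_ ?_) (den_sep g g' hne)
      · have := g.den_pos; have := g'.den_pos; positivity
      · rw [sq]; exact mul_le_mul hg.2.1 hg'.2.1 (by positivity) hN0.le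
    have e1 := abs_sub_le (g : ℝ) y g'
    have e2 := abs_sub_le y (c i) g'
    have e3 := abs_sub_le (c i) y' g'
    rw [abs_sub_comm (c i) y'] at e3
    rw [abs_sub_comm y g] at d1
    linarith
  have hsum : ∑ g ∈ hFfin.toFinset, hitSum c r s (node n t g) ≤ hitSum c r s (node n t f) := by
    unfold hitSum
    rw [← Summable.tsum_finsetSum (fun _ _ => ENNReal.summable)]
    apply ENNReal.tsum_le_tsum
    intro i
    by_cases hex : ∃ g ∈ F, i ∈ hits c r (node n t g)
    · obtain ⟨g, hg, hi⟩ := hex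
      rw [Finset.sum_eq_single g]
      · rw [indicator_of_mem hi, indicator_of_mem]
        obtain ⟨y, hy1, hy2⟩ := hi
        exact ⟨y, hy1, (hgeom g hg).2.2.1 hy2⟩
      · intro g' hg' hne
        apply indicator_of_notMem
        intro hi'
        exact hne (hunique g' (hFfin.mem_toFinset.1 hg') g hg i hi' hi)
      · intro h; exact absurd (hFfin.mem_toFinset.2 hg) h
    · push Not at hex
      rw [Finset.sum_eq_zero]
      · exact zero_le
      · intro g hg
        exact indicator_of_notMem (hex g (hFfin.mem_toFinset.1 hg)) _
  by_contra hno
  push Not at hno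
  -- otherwise every child is too heavy
  have hheavy : ∀ g ∈ hFfin.toFinset,
      ENNReal.ofReal (1 / 20000 * (shellLen n t (2 ^ (k + 8)) / 2) ^ s) <
        hitSum c r s (node n t g) := by
    intro g hg
    rw [hFfin.mem_toFinset] at hg
    obtain ⟨g1, g2, g3, g4⟩ := hgeom g hg
    by_contra hcon
    push Not at hcon
    obtain ⟨g', h1, h2, h3, y, hy, h4⟩ := hno g g1 g3 (hcon.trans (by
      apply ENNReal.ofReal_le_ofReal
      have hp := shellLen_pos n t (2 ^ (k + 8)) (by positivity)
      have hle : shellLen n t (2 ^ (k + 8)) ≤ shellLen n t g.den := by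
        rw [shellLen_eq_rpow n t _ (by positivity), shellLen_eq_rpow n t _ g.den_pos]
        apply Real.rpow_le_rpow_of_nonpos (by exact_mod_cast g.den_pos)
        · have := hg.2.1; rw [hN] at this; exact_mod_cast this
        · have : (0 : ℝ) ≤ n := by positivity
          linarith
      gcongr))
    exact absurd (g4 g' h1 h2 h3 y hy) (not_le.2 h4)
  have hcard0 : 0 < (hFfin.toFinset.card : ℝ) := by
    have : 0 < ℓ * N ^ 2 := by positivity
    linarith
  have hne : hFfin.toFinset.Nonempty := Finset.card_pos.1 (by exact_mod_cast hcard0)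
  have hlt := (ENNReal.sum_lt_sum_of_nonempty hne hheavy).trans_le (hsum.trans hhit)
  rw [Finset.sum_const, nsmul_eq_mul, ← ENNReal.ofReal_natCast,
    ← ENNReal.ofReal_mul (by positivity)] at hlt
  have hlt' := (ENNReal.ofReal_lt_ofReal_iff (by positivity)).1 hlt
  have hp := shellLen_pos n t (2 ^ (k + 8)) (by positivity)
  have hX : 0 < (shellLen n t (2 ^ (k + 8)) / 2) ^ s := by positivity
  have : ℓ * N ^ 2 * (shellLen n t (2 ^ (k + 8)) / 2) ^ s ≤
    2000 * (hFfin.toFinset.card : ℝ) * (shellLen n t (2 ^ (k + 8)) / 2) ^ s := by gcongr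
  nlinarith

/-! ### Lower bound for the dimension -/

/-- A set of vanishing `s`-dimensional Hausdorff measure is covered by countably many balls of positive
radius and arbitrarily small total `s`-weight. A summable positive amount is added to the diameters
to make the radii positive. -/
theorem exists_ball_cover {E : Set ℝ} {s : ℝ} (hs : 0 < s) (hE : μH[s] E = 0) {ε : ℝ≥0∞}
    (hε : ε ≠ 0) : ∃ c r : ℕ → ℝ, (∀ i, 0 < r i) ∧ ∑' i, ENNReal.ofReal (r i ^ s) ≤ ε ∧
      E ⊆ ⋃ i, Metric.closedBall (c i) (r i) := by
  classical
  have hε2 : ε / 2 ≠ 0 := by simp [hε]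
  rw [Measure.hausdorffMeasure_apply] at hE
  have h1 := (iSup_eq_bot.1 (iSup_eq_bot.1 hE 1) one_pos)
  have h2 : (⊥ : ℝ≥0∞) < ε / 2 := bot_lt_iff_ne_bot.2 hε2
  rw [← h1] at h2
  simp only [iInf_lt_iff] at h2
  obtain ⟨u, hcov, hdiam, hsum⟩ := h2
  obtain ⟨δ, hδ, hδs⟩ := ENNReal.exists_pos_sum_of_countable hε2 ℕ
  set w : ℕ → ℝ≥0∞ := fun i => (⨆ (_ : (u i).Nonempty), Metric.ediam (u i) ^ s) + δ i with hw
  have hwtop : ∀ i, w i ≠ ∞ := by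
    intro i
    refine ENNReal.add_ne_top.2 ⟨?_, ENNReal.coe_ne_top⟩
    refine ne_top_of_le_ne_top ?_ (iSup_le fun _ => le_refl (Metric.ediam (u i) ^ s))
    exact ENNReal.rpow_ne_top_of_nonneg hs.le
      (ne_top_of_le_ne_top ENNReal.one_ne_top (hdiam i))
  have hw0 : ∀ i, w i ≠ 0 := by
    intro i h
    have : (δ i : ℝ≥0∞) = 0 := (add_eq_zero.1 h).2
    exact (hδ i).ne' (by exact_mod_cast this)
  have hpos : ∀ i, 0 < (w i ^ (1 / s)).toReal := by
    intro i
    refine ENNReal.toReal_pos ?_ ?_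
    · rw [Ne, ENNReal.rpow_eq_zero_iff]; simp [hw0, hwtop]
    · exact ENNReal.rpow_ne_top_of_nonneg (by positivity) (hwtop i)
  refine ⟨fun i => if h : (u i).Nonempty then h.some else 0, fun i => (w i ^ (1 / s)).toReal,
    hpos, ?_, ?_⟩
  · have he : ∀ i, ENNReal.ofReal ((w i ^ (1 / s)).toReal ^ s) = w i := by
      intro i
      rw [ENNReal.toReal_rpow, ← ENNReal.rpow_mul, one_div_mul_cancel hs.ne', ENNReal.rpow_one,
        ENNReal.ofReal_toReal (hwtop i)]
    simp only [he]
    simp only [hw]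
    rw [ENNReal.tsum_add]
    calc _ ≤ ε / 2 + ε / 2 := add_le_add hsum.le hδs.le
      _ = ε := ENNReal.add_halves ε
  · intro x hx
    obtain ⟨i, hi⟩ := mem_iUnion.1 (hcov hx)
    refine mem_iUnion.2 ⟨i, ?_⟩
    have hne : (u i).Nonempty := ⟨x, hi⟩
    simp only [hne, dif_pos]
    rw [← Metric.closedEBall_ofReal (hpos i).le, Metric.mem_closedEBall,
      ENNReal.ofReal_toReal (ENNReal.rpow_ne_top_of_nonneg (by positivity) (hwtop i))]
    refine (Metric.edist_le_ediam_of_mem hi hne.some_mem).trans ?_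
    have h3 : Metric.ediam (u i) ^ s ≤ w i := by
      simp only [hw, hne, iSup_pos]; exact le_self_add
    calc Metric.ediam (u i) = (Metric.ediam (u i) ^ s) ^ (1 / s) := by
          rw [← ENNReal.rpow_mul, mul_one_div_cancel hs.ne', ENNReal.rpow_one]
      _ ≤ _ := ENNReal.rpow_le_rpow h3 (by positivity)

/-- A point common to a sequence of nodes satisfying the gap condition belongs to the exact
approximation set. Fractions `p / q` that are not in lowest terms gain a factor `2 ^ n`, and those
whose reduced denominator is less than that of `F 0` stay at a positive distance from `x`. -/
theorem mem_ESet_of_nodes {n : ℕ} (hn : 3 ≤ n) {t : ℝ} (ht : 0 < t) (F : ℕ → ℚ)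
    (hlarge : ∀ k, LargeDen n t (F k).den) (hlt : ∀ k, (F k).den < (F (k + 1)).den) {x : ℝ}
    (hx : ∀ k, x ∈ node n t (F k))
    (hgap : ∀ k, ∀ g' : ℚ, g' ≠ F k → (F k).den ≤ g'.den → g'.den < (F (k + 1)).den →
      ((g'.den : ℝ) ^ n)⁻¹ ≤ |x - g'|) :
    x ∈ ESet (fun q : ℝ => q ^ (-(n : ℝ))) (fun q : ℝ => q ^ (-t)) := by
  have hmono : StrictMono fun k => (F k).den := strictMono_nat_of_lt_succ hlt
  have hΨ : ∀ q : ℕ, (q : ℝ) ^ (-(n : ℝ)) = ((q : ℝ) ^ n)⁻¹ := by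
    intro q; rw [Real.rpow_neg (by positivity), Real.rpow_natCast]
  constructor
  · refine Set.infinite_of_injective_forall_mem (f := fun k => ((F k).num, (F k).den)) ?_ ?_
    · intro i j hij
      exact hmono.injective (Prod.mk.inj hij).2
    · intro k
      refine ⟨(F k).den_pos, ?_⟩
      have := node_dist_le ht.le (hx k)
      simp only [hΨ]
      rwa [Rat.cast_def] at this
  · set q₀ := (F 0).den with hq₀
    have hA : ∀ g : ℚ, q₀ ≤ g.den →
        (1 - (g.den : ℝ) ^ (-t)) * ((g.den : ℝ) ^ n)⁻¹ ≤ |x - g| := by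
      intro g hg
      obtain ⟨k, hk1, hk2⟩ : ∃ k, (F k).den ≤ g.den ∧ g.den < (F (k + 1)).den := by
        have hex : ∃ k, g.den < (F k).den := ⟨g.den + 1, (Nat.lt_succ_self _).trans_le
          (hmono.le_apply)⟩
        classical
        have hsp := Nat.find_spec hex
        have h0 : Nat.find hex ≠ 0 := by
          intro h0; rw [h0] at hsp; omega
        obtain ⟨j, hj⟩ := Nat.exists_eq_succ_of_ne_zero h0
        refine ⟨j, ?_, ?_⟩
        · exact not_lt.1 (Nat.find_min hex (m := j) (by omega))
        · rw [hj] at hsp; exact hsp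
      by_cases hgk : g = F k
      · rw [hgk]; exact node_le_dist (hx k)
      · refine le_trans ?_ (hgap k g hgk hk1 hk2)
        have h1 : 0 ≤ (g.den : ℝ) ^ (-t) := by positivity
        have h2 : 0 ≤ ((g.den : ℝ) ^ n)⁻¹ := by positivity
        nlinarith
    have hB : ∀ g : ℚ, g.den < q₀ → 1 / 2 * ((q₀ : ℝ) ^ n)⁻¹ ≤ |x - g| := by
      intro g hg
      have hne : g ≠ F 0 := by rintro rfl; exact lt_irrefl _ hg
      have hs := den_sep g (F 0) hne
      have hd := node_dist_le ht.le (hx 0)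
      rw [← hq₀] at hs hd
      have h6 : |(g : ℝ) - F 0| ≤ |x - F 0| + |x - g| := by
        have := abs_sub_le (g : ℝ) x (F 0)
        rw [abs_sub_comm (g : ℝ) x] at this; linarith
      have hg0 : (0 : ℝ) < g.den := by exact_mod_cast g.den_pos
      have hgR : (g.den : ℝ) ≤ q₀ := by exact_mod_cast hg.le
      have hq2 : (2 : ℝ) ≤ q₀ := by
        have h2 : 2 ≤ 2 ^ n := by
          calc 2 = 2 ^ 1 := rfl
            _ ≤ 2 ^ n := Nat.pow_le_pow_right (by norm_num) (by omega)
        exact_mod_cast h2.trans (hlarge 0).two_pow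
      have h7 : 2 * ((q₀ : ℝ) ^ n)⁻¹ ≤ 1 / (g.den * q₀) := by
        rw [← div_eq_mul_inv, div_le_div_iff₀ (by positivity) (by positivity), one_mul]
        calc 2 * ((g.den : ℝ) * q₀) ≤ q₀ * (q₀ * q₀) := by gcongr
          _ = (q₀ : ℝ) ^ 3 := by ring
          _ ≤ (q₀ : ℝ) ^ n := pow_le_pow_right₀ (by linarith) hn
      have h8 : 0 < ((q₀ : ℝ) ^ n)⁻¹ := by positivity
      linarith
    have hq0pos : 0 < q₀ := (F 0).den_pos
    refine ⟨2 * q₀, ?_⟩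
    intro q hq p
    simp only [hΨ]
    have hqpos : 0 < q := by omega
    have hqR : (0 : ℝ) < q := by exact_mod_cast hqpos
    set g : ℚ := (p : ℚ) / q with hg
    have hgc : (g : ℝ) = (p : ℝ) / q := by rw [hg]; push_cast; rfl
    rw [← hgc]
    have hw0 : 0 ≤ (q : ℝ) ^ (-t) := by positivity
    have hi0 : 0 < ((q : ℝ) ^ n)⁻¹ := by positivity
    have htwo : ∀ d : ℕ, 0 < d → 2 * d ≤ q → ((q : ℝ) ^ n)⁻¹ ≤ 1 / 2 * ((d : ℝ) ^ n)⁻¹ := by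
      intro d hd h2
      have hdR : (0 : ℝ) < d := by exact_mod_cast hd
      have h2R : (2 : ℝ) * d ≤ q := by exact_mod_cast h2
      rw [← one_div, ← one_div, one_div_mul_one_div]
      apply one_div_le_one_div_of_le (by positivity)
      calc 2 * (d : ℝ) ^ n ≤ 2 ^ n * (d : ℝ) ^ n := by
            gcongr; exact le_self_pow₀ (by norm_num) (by omega)
        _ = (2 * (d : ℝ)) ^ n := by rw [mul_pow]
        _ ≤ _ := by gcongr
    rcases lt_or_ge g.den q₀ with h | h
    · refine le_trans ?_ (hB g h)
      have := htwo q₀ hq0pos hq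
      nlinarith
    · have hA' := hA g h
      have hdvd : g.den ∣ q := by
        have := Rat.den_dvd p q
        rw [Rat.divInt_eq_div, Int.cast_natCast, ← hg] at this
        exact_mod_cast this
      obtain ⟨e, he⟩ := hdvd
      rcases Nat.lt_or_ge e 2 with h2 | h2
      · have : e = 1 := by
          rcases Nat.eq_zero_or_pos e with h0 | h0
          · rw [h0] at he; omega
          · omega
        rw [this, mul_one] at he
        rw [he]; exact hA'
      · refine le_trans ?_ hA'
        have h3 := htwo g.den g.den_pos (by rw [he]; nlinarith [g.den_pos])
        have h4 : (g.den : ℝ) ^ (-t) ≤ 1 / 2 := by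
          refine le_trans ?_ (hlarge 0).half
          exact Real.rpow_le_rpow_of_nonpos (by exact_mod_cast hq0pos) (by exact_mod_cast h)
            (by linarith)
        have h5 : 0 < ((g.den : ℝ) ^ n)⁻¹ := by
          have := g.den_pos; positivity
        nlinarith

/-- If the measure were zero, iterating `exists_child` along a cover of tiny `s`-weight would produce a
point of the set lying in no ball of the cover: a ball containing it would meet every node of the
sequence, and its radius would be at most the size of each of them. -/
theorem hausdorffMeasure_ESet_ne_zero {n : ℕ} (hn : 3 ≤ n) {t : ℝ} (ht : 0 < t)
    (htn : t < (n : ℝ) * ((n : ℝ) - 1)) {s : ℝ} (hs0 : 0 < s) (hs : s * (n + t) < 2) :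
    μH[s] (ESet (fun q : ℝ => q ^ (-(n : ℝ))) (fun q : ℝ => q ^ (-t))) ≠ 0 := by
  intro hzero
  have hnR : (3 : ℝ) ≤ n := by exact_mod_cast hn
  have hs1 : s < 1 := by nlinarith
  obtain ⟨Q, hQ⟩ := eventually_atTop.1 (eventually_largeDen hn ht htn)
  set q₀ := Q + 1 with hq₀
  set f₀ : ℚ := 1 / (q₀ : ℚ) with hf₀
  have hf₀den : f₀.den = q₀ := by
    rw [hf₀, one_div, Rat.inv_natCast_den]; simp [hq₀]
  have hpos := shellLen_pos n t f₀.den f₀.den_pos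
  obtain ⟨c, r, hr, hsum, hcov⟩ := exists_ball_cover hs0 hzero
    (ε := ENNReal.ofReal (1 / 20000 * (shellLen n t f₀.den / 2) ^ s))
    (by rw [Ne, ENNReal.ofReal_eq_zero, not_le]; positivity)
  let P : ℚ → Prop := fun f => Q ≤ f.den ∧
    hitSum c r s (node n t f) ≤ ENNReal.ofReal (1 / 20000 * (shellLen n t f.den / 2) ^ s)
  have hP₀ : P f₀ := by
    refine ⟨by rw [hf₀den]; omega, le_trans ?_ hsum⟩
    exact ENNReal.tsum_le_tsum fun i => indicator_le_self' (fun _ _ => zero_le) i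
  have hstep : ∀ f : {f // P f}, ∃ g : {f // P f}, f.1.den < g.1.den ∧
      node n t g.1 ⊆ node n t f.1 ∧
      ∀ g' : ℚ, g' ≠ f.1 → f.1.den ≤ g'.den → g'.den < g.1.den → ∀ y ∈ node n t g.1,
        ((g'.den : ℝ) ^ n)⁻¹ ≤ |y - g'| := by
    rintro ⟨f, hf1, hf2⟩
    obtain ⟨g, h1, h2, h3, h4⟩ := exists_child hn ht hs0 hs1 hs c r hr f (hQ _ hf1) hf2
    exact ⟨⟨g, hf1.trans h1.le, h3⟩, h1, h2, h4⟩
  choose nxt h1 h2 h3 using hstep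
  let F : ℕ → {f // P f} := fun k => nxt^[k] ⟨f₀, hP₀⟩
  have hFs : ∀ k, F (k + 1) = nxt (F k) := fun k => Function.iterate_succ_apply' _ _ _
  have hlt : ∀ k, (F k).1.den < (F (k + 1)).1.den := fun k => by rw [hFs]; exact h1 _
  have hmono : StrictMono fun k => (F k).1.den := strictMono_nat_of_lt_succ hlt
  obtain ⟨x, hx⟩ := IsCompact.nonempty_iInter_of_sequence_nonempty_isCompact_isClosed
    (fun k => node n t (F k).1) (fun k => by rw [hFs]; exact h2 _)
    (fun k => nonempty_Icc.2 (by
      have := shellLen_pos n t (F k).1.den (F k).1.den_pos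
      linarith)) isCompact_Icc (fun k => isClosed_Icc)
  rw [mem_iInter] at hx
  have hxE := mem_ESet_of_nodes hn ht (fun k => (F k).1) (fun k => hQ _ (F k).2.1) hlt hx
    (fun k g' a1 a2 a3 => h3 (F k) g' a1 a2 (by rw [← hFs]; exact a3) x (by rw [← hFs]; exact hx _))
  obtain ⟨i, hi⟩ := mem_iUnion.1 (hcov hxE)
  -- the ball containing `x` meets every node, so its radius vanishes
  have hle : ∀ k, r i ≤ shellLen n t (F k).1.den := by
    intro k
    have hmem : i ∈ hits c r (node n t (F k).1) := ⟨x, hi, hx k⟩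
    have e1 := ENNReal.le_tsum
      (f := (hits c r (node n t (F k).1)).indicator (fun i => ENNReal.ofReal (r i ^ s))) i
    rw [indicator_of_mem hmem] at e1
    have e2 := e1.trans (F k).2.2
    have hp := shellLen_pos n t (F k).1.den (F k).1.den_pos
    rw [ENNReal.ofReal_le_ofReal_iff (by positivity)] at e2
    have e3 : r i ^ s ≤ (shellLen n t (F k).1.den / 2) ^ s := by
      have : 0 < (shellLen n t (F k).1.den / 2) ^ s := by positivity
      linarith
    have := (Real.rpow_le_rpow_iff (hr i).le (by positivity) hs0).1 e3
    linarith
  have hlim : Tendsto (fun k => shellLen n t (F k).1.den) atTop (𝓝 0) := by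
    have e : (fun k => shellLen n t (F k).1.den) =
        (fun y : ℝ => y ^ (-((n : ℝ) + t))) ∘ (fun k => ((F k).1.den : ℝ)) := by
      funext k; exact shellLen_eq_rpow n t _ (F k).1.den_pos
    rw [e]
    exact (tendsto_rpow_neg_atTop (by linarith)).comp
      (tendsto_natCast_atTop_atTop.comp hmono.tendsto_atTop)
  exact absurd (ge_of_tendsto' hlim hle) (not_le.2 (hr i))

/-! ### Upper bound for the dimension -/

/-- The two components of the annulus of points at distance between `(1 - q ^ (-t)) * q ^ (-n)`
and `q ^ (-n)` from `p / q`: the right one for `b = true`, the left one for `b = false`. -/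
def annulusPart (n : ℕ) (t : ℝ) (q : ℕ) (p : ℤ) (b : Bool) : Set ℝ :=
  if b then Icc ((p : ℝ) / q + (1 - (q : ℝ) ^ (-t)) * ((q : ℝ) ^ n)⁻¹)
    ((p : ℝ) / q + ((q : ℝ) ^ n)⁻¹)
  else Icc ((p : ℝ) / q - ((q : ℝ) ^ n)⁻¹)
    ((p : ℝ) / q - (1 - (q : ℝ) ^ (-t)) * ((q : ℝ) ^ n)⁻¹)

theorem ediam_annulusPart (n : ℕ) (t : ℝ) (q : ℕ) (p : ℤ) (b : Bool) :
    Metric.ediam (annulusPart n t q p b) = ENNReal.ofReal (shellLen n t q) := by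
  unfold annulusPart shellLen
  cases b
  · simp only [Bool.false_eq_true, if_false, Real.ediam_Icc]
    congr 1; ring
  · simp only [if_true, Real.ediam_Icc]
    congr 1; ring

/-- Only finitely many pairs with bounded denominator can approximate a given point, so a point
of `ESet` lies in annuli of arbitrarily large denominator. -/
theorem exists_mem_annulusPart {n : ℕ} {t : ℝ} {k : ℕ} {x : ℝ} (hxk : |x| ≤ k)
    (hx : x ∈ ESet (fun q : ℝ => q ^ (-(n : ℝ))) (fun q : ℝ => q ^ (-t))) (Q : ℕ) :
    ∃ q : ℕ, Q ≤ q ∧ 0 < q ∧ ∃ p : ℤ, |p| ≤ ((k + 1) * q : ℕ) ∧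
      ∃ b, x ∈ annulusPart n t q p b := by
  have hΨ : ∀ q : ℕ, (q : ℝ) ^ (-(n : ℝ)) = ((q : ℝ) ^ n)⁻¹ := by
    intro q; rw [Real.rpow_neg (by positivity), Real.rpow_natCast]
  obtain ⟨hW, Q₀, hQ₀⟩ := hx
  simp only [hΨ] at hQ₀
  have hp : ∀ pq : ℤ × ℕ, 0 < pq.2 →
      |x - (pq.1 : ℝ) / (pq.2 : ℝ)| ≤ ((pq.2 : ℝ) ^ n)⁻¹ → |pq.1| ≤ ((k + 1) * pq.2 : ℕ) := by
    rintro ⟨p, q⟩ hq h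
    simp only at hq h ⊢
    have hqR : (1 : ℝ) ≤ q := by exact_mod_cast hq
    have h1 : ((q : ℝ) ^ n)⁻¹ ≤ 1 := inv_le_one_of_one_le₀ (one_le_pow₀ hqR)
    have h2 : |(p : ℝ) / q| ≤ k + 1 := by
      have := abs_sub_abs_le_abs_sub ((p : ℝ) / q) x
      rw [abs_sub_comm] at this
      linarith
    rw [abs_div, Nat.abs_cast, div_le_iff₀ (by linarith)] at h2
    have h3 : ((|p| : ℤ) : ℝ) ≤ (((k + 1) * q : ℕ) : ℤ) := by push_cast; exact h2
    exact_mod_cast h3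
  have hfin : {pq : ℤ × ℕ | |pq.1| ≤ ((k + 1) * pq.2 : ℕ) ∧ pq.2 ≤ Q + Q₀}.Finite := by
    refine ((Set.finite_Icc (-(((k + 1) * (Q + Q₀) : ℕ) : ℤ)) (((k + 1) * (Q + Q₀) : ℕ) : ℤ)).prod
      (Set.finite_Iic (Q + Q₀))).subset ?_
    rintro ⟨p, q⟩ ⟨h1, h2⟩
    simp only at h1 h2
    refine ⟨abs_le.1 (h1.trans ?_), h2⟩
    exact_mod_cast Nat.mul_le_mul_left _ h2
  obtain ⟨⟨p, q⟩, ⟨hq, hpq⟩, hnot⟩ := (Set.Infinite.sdiff hW hfin).nonempty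
  simp only [hΨ] at hq hpq
  have hpb := hp (p, q) hq hpq
  have hqQ : Q + Q₀ < q := by
    by_contra hc
    exact hnot ⟨hpb, not_lt.1 hc⟩
  have hlow := hQ₀ q (by omega) p
  refine ⟨q, by omega, hq, p, hpb, ?_⟩
  rcases le_total 0 (x - (p : ℝ) / q) with h | h
  · rw [abs_of_nonneg h] at hpq hlow
    refine ⟨true, ?_⟩
    simp only [annulusPart, if_true]
    constructor <;> linarith
  · rw [abs_of_nonpos h] at hpq hlow
    refine ⟨false, ?_⟩
    simp only [annulusPart, Bool.false_eq_true, if_false]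
    constructor <;> linarith

/-- Covering by the annuli of all denominators beyond a given bound gives the tail of the convergent
series `∑ q ^ (1 - d * (n + t))`, up to a constant. -/
theorem hausdorffMeasure_ESet_inter {n : ℕ} {t : ℝ} (hnt : 0 < n + t) {d : ℝ} (hd0 : 0 < d)
    (hd : 2 < d * (n + t)) (k : ℕ) :
    μH[d] (ESet (fun q : ℝ => q ^ (-(n : ℝ))) (fun q : ℝ => q ^ (-t)) ∩ {x | |x| ≤ k}) = 0 := by
  set C : ℝ := 2 * (2 * (k + 1) + 1) with hC
  set a : ℕ → ℝ≥0∞ := fun q => ENNReal.ofReal (C * (q : ℝ) ^ (1 - d * (n + t))) with ha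
  have hsum : ∑' q, a q ≠ ∞ := by
    have : Summable fun q : ℕ => C * (q : ℝ) ^ (1 - d * (n + t)) :=
      (Real.summable_nat_rpow.2 (by linarith)).mul_left _
    exact this.tsum_ofReal_ne_top
  let ι : ℕ → Type := fun m => (Σ j : ℕ, (Finset.Icc (-(((k + 1) * (j + (m + 1)) : ℕ) : ℤ))
    (((k + 1) * (j + (m + 1)) : ℕ) : ℤ)) × Bool)
  have hcount : ∀ m, Countable (ι m) := fun m => by
    show Countable (Σ j : ℕ, _ × Bool)
    infer_instance
  let T : ∀ m, ι m → Set ℝ := fun m i => annulusPart n t (i.1 + (m + 1)) i.2.1.1 i.2.2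
  have hr : Tendsto (fun m : ℕ => ENNReal.ofReal (((m + 1 : ℕ) : ℝ) ^ (-((n : ℝ) + t)))) atTop
      (𝓝 0) := by
    rw [← ENNReal.ofReal_zero]
    refine (ENNReal.continuous_ofReal.tendsto 0).comp ?_
    exact (tendsto_rpow_neg_atTop hnt).comp
      (tendsto_natCast_atTop_atTop.comp (tendsto_add_atTop_nat 1))
  have key := Measure.hausdorffMeasure_le_liminf_tsum d
    (ESet (fun q : ℝ => q ^ (-(n : ℝ))) (fun q : ℝ => q ^ (-t)) ∩ {x | |x| ≤ k}) _ hr T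
    (Eventually.of_forall fun m i => ?_) (Eventually.of_forall fun m x hx => ?_)
  · refine le_antisymm (key.trans ?_) zero_le
    have hle : ∀ m, ∑' i, Metric.ediam (T m i) ^ d ≤ ∑' j, a (j + (m + 1)) := by
      intro m
      rw [ENNReal.tsum_sigma']
      refine ENNReal.tsum_le_tsum fun j => ?_
      set q := j + (m + 1) with hq
      have hq0 : 0 < q := by omega
      have hqR : (1 : ℝ) ≤ q := by exact_mod_cast hq0
      simp only [T, ediam_annulusPart]
      rw [tsum_fintype, Finset.sum_const, Finset.card_univ, Fintype.card_prod, Fintype.card_coe,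
        Int.card_Icc, Fintype.card_bool, nsmul_eq_mul, shellLen_eq_rpow n t _ hq0,
        ENNReal.ofReal_rpow_of_nonneg (by positivity) hd0.le, ← ENNReal.ofReal_natCast,
        ← ENNReal.ofReal_mul (by positivity), ← Real.rpow_mul (by positivity)]
      refine ENNReal.ofReal_le_ofReal ?_
      have e1 : (((((k + 1) * q : ℕ) : ℤ) + 1 - -(((k + 1) * q : ℕ) : ℤ)).toNat : ℕ) =
          2 * ((k + 1) * q) + 1 := by omega
      rw [e1]
      change _ ≤ C * (q : ℝ) ^ (1 - d * (n + t))
      push_cast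
      have e2 : (q : ℝ) ^ (1 - d * (n + t)) = q * (q : ℝ) ^ (-((n : ℝ) + t) * d) := by
        rw [show 1 - d * ((n : ℝ) + t) = 1 + -((n : ℝ) + t) * d by ring,
          Real.rpow_add (by linarith), Real.rpow_one]
      rw [e2, ← mul_assoc C]
      refine mul_le_mul_of_nonneg_right ?_ (by positivity)
      rw [hC]; nlinarith
    have hlim : Tendsto (fun m => ∑' j, a (j + (m + 1))) atTop (𝓝 0) :=
      (ENNReal.tendsto_sum_nat_add a hsum).comp (tendsto_add_atTop_nat 1)
    rw [← hlim.liminf_eq]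
    exact liminf_le_liminf (Eventually.of_forall hle)
  · simp only [T, ediam_annulusPart]
    rw [shellLen_eq_rpow n t _ (by omega)]
    refine ENNReal.ofReal_le_ofReal ?_
    exact Real.rpow_le_rpow_of_nonpos (by positivity) (by exact_mod_cast Nat.le_add_left _ _)
      (by linarith)
  · obtain ⟨q, hq, -, p, hp, b, hb⟩ := exists_mem_annulusPart hx.2 hx.1 (m + 1)
    obtain ⟨j, rfl⟩ := Nat.exists_eq_add_of_le' hq
    exact mem_iUnion.2 ⟨⟨j, ⟨p, Finset.mem_Icc.2 (abs_le.1 hp)⟩, b⟩, hb⟩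

theorem dimH_ESet_le {n : ℕ} {t : ℝ} (hnt : 0 < n + t) :
    dimH (ESet (fun q : ℝ => q ^ (-(n : ℝ))) (fun q : ℝ => q ^ (-t))) ≤
      ENNReal.ofReal (2 / (n + t)) := by
  have hU : ESet (fun q : ℝ => q ^ (-(n : ℝ))) (fun q : ℝ => q ^ (-t)) ⊆
      ⋃ k : ℕ, ESet (fun q : ℝ => q ^ (-(n : ℝ))) (fun q : ℝ => q ^ (-t)) ∩ {x | |x| ≤ k} := by
    intro x hx
    obtain ⟨k, hk⟩ := exists_nat_ge |x|
    exact mem_iUnion.2 ⟨k, hx, hk⟩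
  refine (dimH_mono hU).trans ?_
  rw [dimH_iUnion]
  refine iSup_le fun k => dimH_le fun d hd => ?_
  by_contra hc
  rw [not_le, ENNReal.ofReal_lt_coe_iff (by positivity)] at hc
  have hd0 : (0 : ℝ) < d := lt_trans (by positivity) hc
  rw [div_lt_iff₀ hnt] at hc
  rw [hausdorffMeasure_ESet_inter hnt hd0 hc k] at hd
  exact ENNReal.zero_ne_top hd

/-- **Theorem.** For a natural number `τ₁ ≥ 3`, `Ψ(q) = q^(−τ₁)` and `ω(q) = q^(−τ₂)` with
`0 < τ₂ < τ₁(τ₁ − 1)`, one has `dim_H(E(Ψ,ω)) = 2/(τ₁ + τ₂)`. -/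
theorem dimH_ESet_rpow_nat (τ₁ : ℕ) (hτ₁ : 3 ≤ τ₁) (τ₂ : ℝ) (hτ₂pos : 0 < τ₂)
    (hτ₂ : τ₂ < (τ₁ : ℝ) * ((τ₁ : ℝ) - 1)) :
    dimH (ESet (fun q : ℝ => q ^ (-(τ₁ : ℝ))) (fun q : ℝ => q ^ (-τ₂))) =
      ENNReal.ofReal (2 / ((τ₁ : ℝ) + τ₂)) := by
  have hnt : 0 < (τ₁ : ℝ) + τ₂ := by positivity
  refine le_antisymm (dimH_ESet_le hnt) (ENNReal.le_of_forall_nnreal_lt fun s hs => ?_)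
  rcases eq_or_ne s 0 with rfl | hs0
  · exact zero_le
  · rw [ENNReal.lt_ofReal_iff_toReal_lt ENNReal.coe_ne_top, ENNReal.coe_toReal,
      lt_div_iff₀ hnt] at hs
    exact le_dimH_of_hausdorffMeasure_ne_zero
      (hausdorffMeasure_ESet_ne_zero hτ₁ hτ₂pos hτ₂ (by positivity) hs)
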